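/- Let γ : ℝ → ℂ be continuous and integrable, with Fourier transform γ̂ supported in [0,1]. Then ∫_{−∞}^{0} e^{2πit} γ(t) dt = (1/(2πi)) ∫_{1}^{2} γ̂(ξ−1)/ξ dξ. -/

import Mathlib

open MeasureTheory Real Set Function
open scoped FourierTransform ENNReal NNReal

/-- `e2pi t = e^{2πit}`. -/
noncomputable def e2pi (t : ℝ) : ℂ := Complex.exp (2 * (Real.pi : ℂ) * Complex.I * (t : ℂ))

/-- Convolution of two functions on `ℝ`. -/
noncomputable def conv (f g : ℝ → ℂ) (x : ℝ) : ℂ := ∫ t, f t * g (x - t)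

/-! Write `f t = e^{2πit} γ(t)`, whose Fourier transform `𝓕 γ (ξ - 1)` is supported in `[1, 2]`, so
that `k ξ = 𝓕 f ξ / (2πiξ)` is integrable. For `h ≥ 0` the function `x ↦ ∫_{x-h}^x f` is the
convolution of `f` with the indicator of `(0, h]`; it is continuous and integrable with Fourier
transform `(1 - e^{-2πihξ}) k ξ`. Fourier inversion gives `∫_{x-h}^x f = 𝓕⁻ k x - 𝓕⁻ k (x - h)`, and
as `h → ∞` the Riemann–Lebesgue lemma leaves `∫_{-∞}^x f = 𝓕⁻ k x`. Take `x = 0`. -/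

section

open Filter Topology ContinuousLinearMap
open scoped Convolution RealInnerProductSpace

variable {E : Type*} [NormedAddCommGroup E] [NormedSpace ℂ E]

lemma e2pi_eq_fourierChar (t : ℝ) : e2pi t = 𝐞 t := by
  rw [e2pi, fourierChar_apply]
  congr 1
  push_cast
  ring

section InnerProductSpace

variable {V : Type*} [NormedAddCommGroup V] [InnerProductSpace ℝ V] [MeasurableSpace V]
  [BorelSpace V] [FiniteDimensional ℝ V]

lemma fourier_fourierChar_smul (f : V → E) (ω ξ : V) :
    𝓕 (fun t => 𝐞 ⟪t, ω⟫ • f t) ξ = 𝓕 f (ξ - ω) := by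
  simp only [fourier_eq, smul_smul, ← AddChar.map_add_eq_mul]
  congr! 4 with t
  rw [inner_sub_right]
  ring

lemma fourierInv_fourierChar_smul (f : V → E) (a x : V) :
    𝓕⁻ (fun ξ => 𝐞 ⟪ξ, a⟫ • f ξ) x = 𝓕⁻ f (x + a) := by
  rw [fourierInv_eq_fourier_neg, fourier_fourierChar_smul, fourierInv_eq_fourier_neg, neg_add']

lemma fourierInv_sub {f g : V → E} (hf : Integrable f) (hg : Integrable g) (x : V) :
    𝓕⁻ (f - g) x = 𝓕⁻ f x - 𝓕⁻ g x := by
  simp only [fourierInv_eq_fourier_neg, fourier_eq, Pi.sub_apply, smul_sub]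
  exact integral_sub ((fourierIntegral_convergent_iff _).2 hf)
    ((fourierIntegral_convergent_iff _).2 hg)

lemma continuous_fourier_of_integrable {f : V → E} (hf : Integrable f) : Continuous (𝓕 f) :=
  VectorFourier.fourierIntegral_continuous continuous_fourierChar continuous_inner hf

end InnerProductSpace

lemma tendsto_fourierInv_atBot (f : ℝ → E) : Tendsto (𝓕⁻ f) atBot (𝓝 0) := by
  rw [fourierInv_eq_fourier_comp_neg]
  exact (zero_at_infty_fourier _).mono_left atBot_le_cocompact

lemma fourier_indicator_Ioc_one {a b ξ : ℝ} (hab : a ≤ b) (hξ : ξ ≠ 0) :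
    𝓕 ((Ioc a b).indicator (1 : ℝ → ℂ)) ξ =
      (𝐞 (-(a * ξ)) - 𝐞 (-(b * ξ))) * (2 * π * Complex.I * ξ)⁻¹ := by
  have hc : -(2 * π * Complex.I * ξ) ≠ 0 := by simp [pi_ne_zero, hξ]
  calc 𝓕 ((Ioc a b).indicator (1 : ℝ → ℂ)) ξ
      = ∫ t in a..b, Complex.exp (-(2 * π * Complex.I * ξ) * t) := by
        rw [fourier_real_eq_integral_exp_smul, intervalIntegral.integral_of_le hab,
          ← integral_indicator measurableSet_Ioc]
        refine integral_congr_ae (.of_forall fun t => ?_)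
        by_cases ht : t ∈ Ioc a b
        · simp only [indicator_of_mem ht, Pi.one_apply, smul_eq_mul, mul_one]
          congr 1
          push_cast
          ring
        · simp only [indicator_of_notMem ht, smul_zero]
    _ = (𝐞 (-(a * ξ)) - 𝐞 (-(b * ξ))) * (2 * π * Complex.I * ξ)⁻¹ := by
        rw [integral_exp_mul_complex hc, div_neg, ← neg_div, neg_sub, div_eq_mul_inv,
          fourierChar_apply, fourierChar_apply]
        congr 3 <;> push_cast <;> ring_nf

lemma indicator_Ioc_one_convolution {a b : ℝ} (hab : a ≤ b) (f : ℝ → E) (x : ℝ) :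
    ((Ioc a b).indicator (1 : ℝ → ℂ) ⋆[lsmul ℂ ℂ] f) x = ∫ t in (x - b)..(x - a), f t :=
  calc ((Ioc a b).indicator (1 : ℝ → ℂ) ⋆[lsmul ℂ ℂ] f) x
      = ∫ t in a..b, f (x - t) := by
        rw [intervalIntegral.integral_of_le hab, ← integral_indicator measurableSet_Ioc]
        simp only [convolution_def, lsmul_apply, indicator_apply, Pi.one_apply, ite_smul, one_smul,
          zero_smul]
    _ = ∫ t in (x - b)..(x - a), f t := intervalIntegral.integral_comp_sub_left f x

lemma integral_sub_left_eq_convolution {h : ℝ} (hh : 0 ≤ h) (f : ℝ → E) :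
    (fun x => ∫ t in (x - h)..x, f t) = (Ioc 0 h).indicator (1 : ℝ → ℂ) ⋆[lsmul ℂ ℂ] f := by
  funext x
  rw [indicator_Ioc_one_convolution hh, sub_zero]

lemma integrable_indicator_Ioc_one (a b : ℝ) :
    Integrable ((Ioc a b).indicator (1 : ℝ → ℂ)) :=
  (integrable_indicator_iff measurableSet_Ioc).2 (by simp [Pi.one_def])

lemma integrable_integral_sub_left {f : ℝ → E} (hf : Integrable f) {h : ℝ} (hh : 0 ≤ h) :
    Integrable fun x => ∫ t in (x - h)..x, f t := by
  rw [integral_sub_left_eq_convolution hh]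
  exact (integrable_indicator_Ioc_one 0 h).integrable_convolution _ hf

lemma continuous_integral_sub_left {f : ℝ → E} (hf : Integrable f) (h : ℝ) :
    Continuous fun x => ∫ t in (x - h)..x, f t := by
  have hprim := hf.continuous_primitive 0
  have hdiff : (fun x => ∫ t in (x - h)..x, f t) =
      fun x => (∫ t in 0..x, f t) - ∫ t in 0..(x - h), f t := by
    funext x
    exact (intervalIntegral.integral_interval_sub_left hf.intervalIntegrable
      hf.intervalIntegrable).symm
  rw [hdiff]
  exact hprim.sub (hprim.comp (continuous_id.sub continuous_const))

/-- The function `𝓕 f ξ / (2πiξ)`, formally the Fourier transform of the primitive of `f`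
vanishing at `-∞`. Its value `0` at `ξ = 0` is a convention that no integral sees. -/
noncomputable def fourierPrimitive (f : ℝ → E) (ξ : ℝ) : E :=
  (2 * π * Complex.I * ξ : ℂ)⁻¹ • 𝓕 f ξ

lemma support_fourierPrimitive_subset (f : ℝ → E) : support (fourierPrimitive f) ⊆ support (𝓕 f) :=
  support_smul_subset_right _ _

lemma integrable_fourierPrimitive {f : ℝ → E} (hf : Integrable f) {K : Set ℝ} (hK : IsCompact K)
    (h0 : (0 : ℝ) ∉ K) (hsupp : support (𝓕 f) ⊆ K) : Integrable (fourierPrimitive f) := by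
  have hcont : ContinuousOn (fourierPrimitive f) K := by
    refine ContinuousOn.smul (ContinuousOn.inv₀ (by fun_prop) fun ξ hξ => ?_)
      (continuous_fourier_of_integrable hf).continuousOn
    simpa [pi_ne_zero] using ne_of_mem_of_not_mem hξ h0
  exact (integrableOn_iff_integrable_of_support_subset
    ((support_fourierPrimitive_subset f).trans hsupp)).1 (hcont.integrableOn_compact hK)

variable [CompleteSpace E]

lemma fourier_integral_sub_left {f : ℝ → E} (hf : Integrable f) {h ξ : ℝ} (hh : 0 ≤ h)
    (hξ : ξ ≠ 0) :
    𝓕 (fun x => ∫ t in (x - h)..x, f t) ξ =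
      fourierPrimitive f ξ - 𝐞 ⟪ξ, -h⟫ • fourierPrimitive f ξ := by
  rw [integral_sub_left_eq_convolution hh,
    fourier_smul_convolution_eq (integrable_indicator_Ioc_one 0 h) hf,
    fourier_indicator_Ioc_one hh hξ, mul_smul, sub_smul, Circle.smul_def, fourierPrimitive]
  simp

lemma integral_sub_left_eq_fourierInv_sub {f : ℝ → E} (hf : Integrable f)
    (hk : Integrable (fourierPrimitive f)) {h : ℝ} (hh : 0 ≤ h) (x : ℝ) :
    ∫ t in (x - h)..x, f t = 𝓕⁻ (fourierPrimitive f) x - 𝓕⁻ (fourierPrimitive f) (x - h) := by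
  set k := fourierPrimitive f
  have hk' : Integrable fun ξ => 𝐞 ⟪ξ, -h⟫ • k ξ := by
    simpa using (fourierIntegral_convergent_iff (V := ℝ) h).2 hk
  have hfourier : 𝓕 (fun x => ∫ t in (x - h)..x, f t) =ᵐ[volume]
      k - fun ξ => 𝐞 ⟪ξ, -h⟫ • k ξ := by
    filter_upwards [Measure.ae_ne volume (0 : ℝ)] with ξ hξ
    exact fourier_integral_sub_left hf hh hξ
  calc ∫ t in (x - h)..x, f t
      = 𝓕⁻ (𝓕 fun x => ∫ t in (x - h)..x, f t) x := by
        rw [(continuous_integral_sub_left hf h).fourierInv_fourier_eq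
          (integrable_integral_sub_left hf hh) ((hk.sub hk').congr hfourier.symm)]
    _ = 𝓕⁻ k x - 𝓕⁻ (fun ξ => 𝐞 ⟪ξ, -h⟫ • k ξ) x := by
        rw [fourierInv_congr_ae hfourier, fourierInv_sub hk hk']
    _ = 𝓕⁻ k x - 𝓕⁻ k (x - h) := by
        rw [fourierInv_fourierChar_smul, sub_eq_add_neg x h]

theorem integral_Iic_eq_fourierInv_fourierPrimitive {f : ℝ → E} (hf : Integrable f)
    (hk : Integrable (fourierPrimitive f)) (x : ℝ) :
    ∫ t in Iic x, f t = 𝓕⁻ (fourierPrimitive f) x := by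
  have hwindow : Tendsto (fun y => ∫ t in y..x, f t) atBot (𝓝 (∫ t in Iic x, f t)) :=
    intervalIntegral_tendsto_integral_Iic x hf.integrableOn tendsto_id
  have hinv : Tendsto (fun y => ∫ t in y..x, f t) atBot (𝓝 (𝓕⁻ (fourierPrimitive f) x - 0)) := by
    refine ((tendsto_fourierInv_atBot (fourierPrimitive f)).const_sub _).congr' ?_
    filter_upwards [eventually_le_atBot x] with y hy
    simpa using (integral_sub_left_eq_fourierInv_sub hf hk (sub_nonneg.2 hy) x).symm
  simpa using tendsto_nhds_unique hwindow hinv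

theorem integral_Iic_zero_eq_of_support_fourier_subset {f : ℝ → E} (hf : Integrable f) {a b : ℝ}
    (h0 : (0 : ℝ) ∉ Icc a b) (hsupp : support (𝓕 f) ⊆ Icc a b) :
    ∫ t in Iic 0, f t = (1 / (2 * π * Complex.I)) • ∫ ξ in a..b, (ξ : ℂ)⁻¹ • 𝓕 f ξ := by
  -- The support of the continuous function `𝓕 f` is open, so it misses the endpoints.
  have hIoc : support (𝓕 f) ⊆ Ioc a b :=
    (interior_maximal hsupp (continuous_fourier_of_integrable hf).isOpen_support).trans
      (interior_Icc.trans_subset Ioo_subset_Ioc_self)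
  calc ∫ t in Iic 0, f t
      = ∫ ξ, fourierPrimitive f ξ := by
        rw [integral_Iic_eq_fourierInv_fourierPrimitive hf
          (integrable_fourierPrimitive hf isCompact_Icc h0 hsupp), fourierInv_eq]
        simp
    _ = ∫ ξ in a..b, fourierPrimitive f ξ :=
        (intervalIntegral.integral_eq_integral_of_support_subset
          ((support_fourierPrimitive_subset f).trans hIoc)).symm
    _ = (1 / (2 * π * Complex.I)) • ∫ ξ in a..b, (ξ : ℂ)⁻¹ • 𝓕 f ξ := by
        simp only [fourierPrimitive, mul_inv _ (Complex.ofReal _), mul_smul,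
          intervalIntegral.integral_smul, one_div]

theorem statement1_general {γ : ℝ → E} (hInt : Integrable γ) {a b : ℝ}
    (hsupp : support (𝓕 γ) ⊆ Icc a b) {ω : ℝ} (h0 : (0 : ℝ) ∉ Icc (a + ω) (b + ω)) :
    ∫ t in Iic 0, e2pi (ω * t) • γ t =
      (1 / (2 * π * Complex.I)) • ∫ ξ in (a + ω)..(b + ω), (ξ : ℂ)⁻¹ • 𝓕 γ (ξ - ω) := by
  have hmod : (fun t => e2pi (ω * t) • γ t) = fun t => 𝐞 ⟪t, ω⟫ • γ t := by
    simp [e2pi_eq_fourierChar, Circle.smul_def]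
  have hfourier : 𝓕 (fun t => e2pi (ω * t) • γ t) = fun ξ => 𝓕 γ (ξ - ω) := by
    funext ξ
    rw [hmod, fourier_fourierChar_smul]
  have hf : Integrable fun t => e2pi (ω * t) • γ t := by
    simpa [hmod] using (fourierIntegral_convergent_iff (V := ℝ) (-ω)).2 hInt
  have hshift : support (𝓕 fun t => e2pi (ω * t) • γ t) ⊆ Icc (a + ω) (b + ω) := by
    rw [hfourier]
    intro ξ hξ
    have hmem : ξ - ω ∈ Icc a b := hsupp hξ
    exact ⟨le_sub_iff_add_le.1 hmem.1, sub_le_iff_le_add.1 hmem.2⟩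
  simpa only [hfourier] using integral_Iic_zero_eq_of_support_fourier_subset hf h0 hshift

end

/-- if `γ : ℝ → ℂ` is continuous and integrable with `𝓕γ` supported in `[0,1]`,
then `∫_{-∞}^0 e^{2πit} γ(t) dt = (1/(2πi)) ∫_1^2 𝓕γ(ξ-1)/ξ dξ`. -/
theorem statement1 (γ : ℝ → ℂ) (hc : Continuous γ) (hInt : Integrable γ)
    (hsupp : Function.support (𝓕 γ) ⊆ Set.Icc 0 1) :
    (∫ t in Set.Iic (0:ℝ), e2pi t * γ t)
      = (1 / (2 * (Real.pi : ℂ) * Complex.I)) * ∫ ξ in (1:ℝ)..2, 𝓕 γ (ξ - 1) / (ξ : ℂ) := by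
  simpa [one_add_one_eq_two, div_eq_inv_mul] using
    statement1_general hInt hsupp (ω := 1) (by norm_num)
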